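/- Let Ξ be a nonempty compact subset of ℝ^d, let ψ_1, …, ψ_m : Ξ → ℝ be bounded Borel measurable functions, let γ_1, …, γ_m ∈ ℝ, let 𝒫 be the associated ambiguity set, assumed nonempty, and let Q : Ξ → ℝ be bounded and Borel measurable. Then for every ε > 0 there exists a finitely supported probability measure ∑_{j=1}^n p_j δ_{ξ_j} on Ξ with ∑_{j=1}^n p_j ψ_i(ξ_j) ≤ γ_i + ε for every i ∈ {1,…,m} and |sup_{P ∈ 𝒫} ∫_Ξ Q dP − ∑_{j=1}^n p_j Q(ξ_j)| ≤ ε; that is, an ε-feasible discrete distribution that is ε-optimal for the worst-case expected value problem. -/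

import Mathlib

open MeasureTheory Filter

/-!
Pick a feasible `P` whose expected value is within `ε / 2` of the supremum and collect the objective
and the finitely many constraint functions into one bounded vector-valued map. Its expectation under
`P` lies in the closed convex hull of its values on `Ξ`, hence within `ε / 2` of a finite convex
combination of such values. The nodes and weights of that combination form the required
distribution.
-/

lemma exists_fin_sum_smul_eq_of_mem_convexHull_image {𝕜 α E : Type*} [Field 𝕜] [LinearOrder 𝕜]
    [IsStrictOrderedRing 𝕜] [AddCommGroup E] [Module 𝕜 E] {f : α → E} {s : Set α} {y : E}
    (hy : y ∈ convexHull 𝕜 (f '' s)) :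
    ∃ (n : ℕ) (x : Fin n → α) (p : Fin n → 𝕜),
      (∀ j, x j ∈ s) ∧ (∀ j, 0 ≤ p j) ∧ ∑ j, p j = 1 ∧ ∑ j, p j • f (x j) = y := by
  obtain ⟨κ, _, w, z, hw_nonneg, hw_sum, hz, hwz⟩ := mem_convexHull_iff_exists_fintype.1 hy
  choose x hx hfx using hz
  let e := (Fintype.equivFin κ).symm
  refine ⟨Fintype.card κ, x ∘ e, w ∘ e, fun j => hx _, fun j => hw_nonneg _, ?_, ?_⟩
  · exact (e.sum_comp w).trans hw_sum
  · calc ∑ j, w (e j) • f (x (e j)) = ∑ k, w k • f (x k) := e.sum_comp fun k => w k • f (x k)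
      _ = ∑ k, w k • z k := by simp only [hfx]
      _ = y := hwz

section Integral

variable {Ω E : Type*} [MeasurableSpace Ω] [NormedAddCommGroup E] {μ : Measure Ω} {s : Set Ω}
  {f : Ω → E}

lemma integrable_of_norm_le_on [IsFiniteMeasure μ] (hs : ∀ᵐ x ∂μ, x ∈ s)
    (hf : AEStronglyMeasurable f μ) (hfb : ∃ C, ∀ x ∈ s, ‖f x‖ ≤ C) : Integrable f μ := by
  obtain ⟨C, hC⟩ := hfb
  exact Integrable.of_bound hf C (hs.mono hC)

variable [NormedSpace ℝ E] [IsProbabilityMeasure μ]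

lemma integral_mem_closure_convexHull_image [CompleteSpace E] (hs : ∀ᵐ x ∂μ, x ∈ s)
    (hf : Integrable f μ) : ∫ x, f x ∂μ ∈ closure (convexHull ℝ (f '' s)) := by
  refine (convex_convexHull ℝ _).closure.integral_mem isClosed_closure (hs.mono fun x hx => ?_) hf
  exact subset_closure (subset_convexHull ℝ _ (Set.mem_image_of_mem f hx))

lemma exists_fin_dist_integral_sum_smul_lt [CompleteSpace E] (hs : ∀ᵐ x ∂μ, x ∈ s)
    (hf : Integrable f μ) {ε : ℝ} (hε : 0 < ε) :
    ∃ (n : ℕ) (ξ : Fin n → Ω) (p : Fin n → ℝ),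
      (∀ j, ξ j ∈ s) ∧ (∀ j, 0 ≤ p j) ∧ ∑ j, p j = 1 ∧
      dist (∫ x, f x ∂μ) (∑ j, p j • f (ξ j)) < ε := by
  obtain ⟨y, hy, hdist⟩ :=
    Metric.mem_closure_iff.1 (integral_mem_closure_convexHull_image hs hf) ε hε
  obtain ⟨n, ξ, p, hξ, hp_nonneg, hp_sum, rfl⟩ :=
    exists_fin_sum_smul_eq_of_mem_convexHull_image hy
  exact ⟨n, ξ, p, hξ, hp_nonneg, hp_sum, hdist⟩

lemma exists_fin_forall_abs_integral_sub_sum_lt {κ : Type*} [Finite κ] {g : κ → Ω → ℝ}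
    (hs : ∀ᵐ x ∂μ, x ∈ s) (hg : ∀ k, Integrable (g k) μ) {ε : ℝ} (hε : 0 < ε) :
    ∃ (n : ℕ) (ξ : Fin n → Ω) (p : Fin n → ℝ),
      (∀ j, ξ j ∈ s) ∧ (∀ j, 0 ≤ p j) ∧ ∑ j, p j = 1 ∧
      ∀ k, |∫ x, g k x ∂μ - ∑ j, p j * g k (ξ j)| < ε := by
  have := Fintype.ofFinite κ
  obtain ⟨n, ξ, p, hξ, hp_nonneg, hp_sum, hdist⟩ :=
    exists_fin_dist_integral_sum_smul_lt (f := fun x k => g k x) hs (Integrable.of_eval hg) hε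
  refine ⟨n, ξ, p, hξ, hp_nonneg, hp_sum, fun k => ?_⟩
  have hk := (dist_le_pi_dist _ _ k).trans_lt hdist
  simpa only [Real.dist_eq, eval_integral hg, Finset.sum_apply, Pi.smul_apply, smul_eq_mul]
    using hk

end Integral

section WorstCaseExpectation

variable {Ω ι : Type*} [MeasurableSpace Ω] {Ξ : Set Ω} {ψ : ι → Ω → ℝ} {γ : ι → ℝ} {Q : Ω → ℝ}

/-- The ambiguity set `𝒫` cut out by the moment constraints `∫ ψ i ≤ γ i`. Probability measures on
`Ξ` are encoded as probability measures on the ambient space that vanish off `Ξ`. A constraint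
function that is not integrable has Bochner integral `0`, so this is the intended notion only for
`ψ i` integrable, e.g. measurable and bounded on `Ξ`. -/
def ambiguitySet (Ξ : Set Ω) (ψ : ι → Ω → ℝ) (γ : ι → ℝ) : Set (Measure Ω) :=
  {P | IsProbabilityMeasure P ∧ P Ξᶜ = 0 ∧ ∀ i, ∫ x, ψ i x ∂P ≤ γ i}

/-- The worst-case expected value of `Q` over the ambiguity set. As a real supremum it is `0`
whenever the ambiguity set is empty or the expected values are unbounded above. -/
noncomputable def worstCaseExpectation (Ξ : Set Ω) (ψ : ι → Ω → ℝ) (γ : ι → ℝ) (Q : Ω → ℝ) : ℝ :=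
  sSup ((fun P : Measure Ω => ∫ x, Q x ∂P) '' ambiguitySet Ξ ψ γ)

lemma bddAbove_integral_image_ambiguitySet (hQb : ∃ C, ∀ x ∈ Ξ, |Q x| ≤ C) :
    BddAbove ((fun P : Measure Ω => ∫ x, Q x ∂P) '' ambiguitySet Ξ ψ γ) := by
  obtain ⟨C, hC⟩ := hQb
  refine ⟨C, ?_⟩
  rintro _ ⟨P, ⟨hP, hPΞ, -⟩, rfl⟩
  have hΞ : ∀ᵐ x ∂P, x ∈ Ξ := hPΞ
  calc ∫ x, Q x ∂P ≤ ‖∫ x, Q x ∂P‖ := Real.le_norm_self _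
    _ ≤ C * P.real Set.univ := norm_integral_le_of_norm_le_const (hΞ.mono hC)
    _ = C := by rw [probReal_univ, mul_one]

lemma exists_mem_ambiguitySet_abs_worstCaseExpectation_sub_lt
    (hne : (ambiguitySet Ξ ψ γ).Nonempty) (hQb : ∃ C, ∀ x ∈ Ξ, |Q x| ≤ C)
    {ε : ℝ} (hε : 0 < ε) :
    ∃ P ∈ ambiguitySet Ξ ψ γ, |worstCaseExpectation Ξ ψ γ Q - ∫ x, Q x ∂P| < ε := by
  obtain ⟨_, ⟨P, hP, rfl⟩, hlt⟩ := exists_lt_of_lt_csSup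
    (hne.image fun P : Measure Ω => ∫ x, Q x ∂P) (sub_lt_self (worstCaseExpectation Ξ ψ γ Q) hε)
  have hle : ∫ x, Q x ∂P ≤ worstCaseExpectation Ξ ψ γ Q :=
    le_csSup (bddAbove_integral_image_ambiguitySet hQb) (Set.mem_image_of_mem _ hP)
  exact ⟨P, hP, by rw [abs_of_nonneg (sub_nonneg.2 hle)]; exact sub_lt_comm.1 hlt⟩

theorem eps_feasible_eps_optimal_for_WCEV_general [Finite ι]
    (hψm : ∀ i, Measurable (ψ i)) (hψb : ∀ i, ∃ C, ∀ x ∈ Ξ, |ψ i x| ≤ C)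
    (hne : (ambiguitySet Ξ ψ γ).Nonempty)
    (hQm : Measurable Q) (hQb : ∃ C, ∀ x ∈ Ξ, |Q x| ≤ C) {ε : ℝ} (hε : 0 < ε) :
    ∃ (n : ℕ) (ξ : Fin n → Ω) (p : Fin n → ℝ),
      (∀ j, ξ j ∈ Ξ) ∧ (∀ j, 0 ≤ p j) ∧ ∑ j, p j = 1 ∧
      (∀ i, ∑ j, p j * ψ i (ξ j) ≤ γ i + ε) ∧
      |worstCaseExpectation Ξ ψ γ Q - ∑ j, p j * Q (ξ j)| ≤ ε := by
  obtain ⟨P, ⟨hP, hPΞ, hPγ⟩, hopt⟩ :=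
    exists_mem_ambiguitySet_abs_worstCaseExpectation_sub_lt hne hQb (half_pos hε)
  have hΞ : ∀ᵐ x ∂P, x ∈ Ξ := hPΞ
  have hint : ∀ k : Option ι, Integrable (k.elim Q ψ) P := by
    rintro (_ | i)
    · exact integrable_of_norm_le_on hΞ hQm.aestronglyMeasurable hQb
    · exact integrable_of_norm_le_on hΞ (hψm i).aestronglyMeasurable (hψb i)
  obtain ⟨n, ξ, p, hξ, hp_nonneg, hp_sum, happrox⟩ :=
    exists_fin_forall_abs_integral_sub_sum_lt hΞ hint (half_pos hε)
  refine ⟨n, ξ, p, hξ, hp_nonneg, hp_sum, fun i => ?_, ?_⟩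
  · have hψi : |∫ x, ψ i x ∂P - ∑ j, p j * ψ i (ξ j)| < ε / 2 := happrox (some i)
    linarith [(abs_lt.1 hψi).1, hPγ i]
  · have hQ : |∫ x, Q x ∂P - ∑ j, p j * Q (ξ j)| < ε / 2 := happrox none
    linarith [abs_sub_le (worstCaseExpectation Ξ ψ γ Q) (∫ x, Q x ∂P) (∑ j, p j * Q (ξ j))]

end WorstCaseExpectation

/-- If the ambiguity set is nonempty and `Q` is bounded Borel
measurable, then for every `ε > 0` there is an `ε`-feasible finitely supported
probability distribution on `Ξ` that is `ε`-optimal for the worst-case expected value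
problem. -/
theorem eps_feasible_eps_optimal_for_WCEV
    (d m : ℕ) (Ξ : Set (EuclideanSpace ℝ (Fin d)))
    (hΞne : Ξ.Nonempty) (hΞc : IsCompact Ξ)
    (ψ : Fin m → EuclideanSpace ℝ (Fin d) → ℝ)
    (hψm : ∀ i, Measurable (ψ i)) (hψb : ∀ i, ∃ C, ∀ x ∈ Ξ, |ψ i x| ≤ C)
    (γ : Fin m → ℝ)
    (hamb : ∃ P : Measure (EuclideanSpace ℝ (Fin d)),
      IsProbabilityMeasure P ∧ P Ξᶜ = 0 ∧ ∀ i, ∫ x, ψ i x ∂P ≤ γ i)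
    (Q : EuclideanSpace ℝ (Fin d) → ℝ) (hQm : Measurable Q)
    (hQb : ∃ C, ∀ x ∈ Ξ, |Q x| ≤ C)
    (ε : ℝ) (hε : 0 < ε) :
    ∃ (n : ℕ) (ξ : Fin n → EuclideanSpace ℝ (Fin d)) (p : Fin n → ℝ),
      (∀ j, ξ j ∈ Ξ) ∧ (∀ j, 0 ≤ p j) ∧ (∑ j, p j = 1) ∧
      (∀ i, ∑ j, p j * ψ i (ξ j) ≤ γ i + ε) ∧
      |sSup {r : ℝ | ∃ P : Measure (EuclideanSpace ℝ (Fin d)),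
          (IsProbabilityMeasure P ∧ P Ξᶜ = 0 ∧ ∀ i, ∫ x, ψ i x ∂P ≤ γ i) ∧
          (∫ x, Q x ∂P) = r} - ∑ j, p j * Q (ξ j)| ≤ ε :=
  eps_feasible_eps_optimal_for_WCEV_general hψm hψb hamb hQm hQb hε
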